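/- Let n ≥ 1, let f : ℝⁿ → ℝ be differentiable, let 0 < m ≤ L, and let M ∈ ℕ. Assume (restricted strong convexity) f(v) ≥ f(u) + ⟨∇f(u), v − u⟩ + (m/2)‖v − u‖₂² for all u, v ∈ ℝⁿ, and (restricted smoothness) f(v) ≤ f(u) + ⟨∇f(u), v − u⟩ + (L/2)‖v − u‖₂² whenever supp(u) ∪ supp(v) has cardinality at most M. For S ⊆ {1,…,n} define E(S) = inf{ f(w) : w ∈ ℝⁿ, w_j = 0 for j ∉ S }, and assume each such infimum is attained. Then for all disjoint S, T ⊆ {1,…,n} with |S ∪ T| ≤ M, ∑_{j∈T} (E(S) − E(S∪{j})) ≥ (m/L)·(E(S) − E(S∪T)). -/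

import Mathlib

open scoped BigOperators RealInnerProductSpace

/-- `E(S) = inf { f(w) : w ∈ ℝⁿ supported on S }`. -/
noncomputable def EInf {n : ℕ} (f : EuclideanSpace ℝ (Fin n) → ℝ)
    (S : Finset (Fin n)) : ℝ :=
  sInf {y | ∃ w : EuclideanSpace ℝ (Fin n), (∀ j ∉ S, w j = 0) ∧ y = f w}

/-- Restricted strong convexity and restricted smoothness imply the weak
submodularity inequality
`∑_{j∈T} (E(S) − E(S∪{j})) ≥ (m/L)·(E(S) − E(S∪T))` for disjoint `S, T` with
`|S ∪ T| ≤ M`. -/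
theorem weak_submodularity_of_rsc_rsm
    {n : ℕ} (hn : 1 ≤ n) (f : EuclideanSpace ℝ (Fin n) → ℝ)
    (hf : Differentiable ℝ f)
    (m L : ℝ) (hm : 0 < m) (hmL : m ≤ L) (M : ℕ)
    (hrsc : ∀ u v : EuclideanSpace ℝ (Fin n),
      f v ≥ f u + ⟪gradient f u, v - u⟫ + (m / 2) * ‖v - u‖ ^ 2)
    (hrsm : ∀ u v : EuclideanSpace ℝ (Fin n),
      (Function.support (fun j => u j) ∪ Function.support (fun j => v j)).ncard ≤ M →
      f v ≤ f u + ⟪gradient f u, v - u⟫ + (L / 2) * ‖v - u‖ ^ 2)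
    (hattained : ∀ S : Finset (Fin n),
      ∃ w : EuclideanSpace ℝ (Fin n), (∀ j ∉ S, w j = 0) ∧ f w = EInf f S)
    (S T : Finset (Fin n)) (hST : Disjoint S T) (hcard : (S ∪ T).card ≤ M) :
    ∑ j ∈ T, (EInf f S - EInf f (S ∪ {j})) ≥
      (m / L) * (EInf f S - EInf f (S ∪ T)) := by
  have hL : 0 < L := lt_of_lt_of_le hm hmL
  have hbdd : ∀ (A : Finset (Fin n)) (w : EuclideanSpace ℝ (Fin n)),
      (∀ j ∉ A, w j = 0) → EInf f A ≤ f w := by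
    intro A w hw
    refine csInf_le ⟨f 0 - ‖gradient f 0‖ ^ 2 / (2 * m), ?_⟩ ⟨w, hw, rfl⟩
    rintro y ⟨v, -, rfl⟩
    have h1 := hrsc 0 v
    have h2 := abs_le.mp (abs_real_inner_le_norm (gradient f 0) (v - 0))
    have h3 : ‖gradient f 0‖ ^ 2 / (2 * m) - ‖gradient f 0‖ * ‖v - 0‖
        + (m / 2) * ‖v - 0‖ ^ 2 = (‖gradient f 0‖ - m * ‖v - 0‖) ^ 2 / (2 * m) := by
      field_simp
      ring
    have h4 : 0 ≤ (‖gradient f 0‖ - m * ‖v - 0‖) ^ 2 / (2 * m) := by positivity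
    linarith [h2.1]
  obtain ⟨u, hu, hfu⟩ := hattained S
  obtain ⟨v, hv, hfv⟩ := hattained (S ∪ T)
  set g := gradient f u with hg
  have key : ∀ j ∈ S ∪ T, EInf f (S ∪ {j}) ≤ f u - g j ^ 2 / (2 * L) := by
    intro j hj
    set w : EuclideanSpace ℝ (Fin n) := u + EuclideanSpace.single j (-(g j) / L) with hw
    have hws : ∀ i ∉ S ∪ {j}, w i = 0 := by
      intro i hi
      simp only [Finset.mem_union, Finset.mem_singleton, not_or] at hi
      simp [hw, hu i hi.1, hi.2]
    have h1 := hbdd _ w hws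
    have h2 := hrsm u w (by
      refine le_trans ?_ hcard
      rw [← Set.ncard_coe_finset]
      refine Set.ncard_le_ncard ?_ (Finset.finite_toSet _)
      intro i hi
      by_contra hc
      have hc' : i ∉ S ∪ T := hc
      have hiS : i ∉ S := fun h => hc' (Finset.mem_union_left _ h)
      have hij : i ≠ j := fun h => hc' (h ▸ hj)
      have e1 := hu i hiS
      have e2 := hws i (by simp [hiS, hij])
      rcases hi with hi | hi
      · exact hi e1
      · exact hi e2)
    have h3 : w - u = EuclideanSpace.single j (-(g j) / L) := by simp [hw]
    rw [h3, EuclideanSpace.inner_single_right, EuclideanSpace.norm_single] at h2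
    simp only [Real.norm_eq_abs, sq_abs, conj_trivial] at h2
    rw [← hg] at h2
    have h4 : -(g j) / L * g j + L / 2 * (-(g j) / L) ^ 2 = - (g j ^ 2 / (2 * L)) := by
      field_simp
      ring
    linarith
  have hgS : ∀ j ∈ S, g j = 0 := by
    intro j hj
    have h1 := key j (Finset.mem_union_left _ hj)
    rw [Finset.union_eq_left.mpr (by simpa using hj), ← hfu] at h1
    have h2 : g j ^ 2 / (2 * L) ≤ 0 := by linarith
    have h3 : g j ^ 2 ≤ 0 := by
      rw [div_le_iff₀ (by positivity)] at h2
      linarith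
    exact pow_eq_zero_iff (two_ne_zero) |>.mp (le_antisymm h3 (sq_nonneg _))
  have hlow : f u - ∑ j ∈ T, g j ^ 2 / (2 * m) ≤ f v := by
    have h1 := hrsc u v
    rw [← hg, EuclideanSpace.norm_sq_eq, PiLp.inner_apply, Finset.mul_sum, add_assoc,
      ← Finset.sum_add_distrib] at h1
    have h2 : ∑ j, (if j ∈ T then -(g j ^ 2 / (2 * m)) else 0) ≤
        ∑ j, (⟪g j, (v - u) j⟫ + m / 2 * ‖(v - u) j‖ ^ 2) := by
      refine Finset.sum_le_sum fun j _ => ?_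
      have e : ⟪g j, (v - u) j⟫ = g j * (v - u) j := by
        simp [mul_comm]
      rw [e, Real.norm_eq_abs, sq_abs]
      split_ifs with hT
      · have h3 : g j ^ 2 / (2 * m) + (g j * (v - u) j + m / 2 * (v - u) j ^ 2)
          = (g j + m * (v - u) j) ^ 2 / (2 * m) := by
          field_simp
          ring
        have h4 : 0 ≤ (g j + m * (v - u) j) ^ 2 / (2 * m) := by positivity
        linarith
      · by_cases hS : j ∈ S
        · rw [hgS j hS]
          have : 0 ≤ m / 2 * (v - u) j ^ 2 := by positivity
          linarith
        · have : (v - u) j = 0 := by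
            simp [hu j hS, hv j (by simp [hS, hT])]
          simp [this]
    rw [Finset.sum_ite_mem, Finset.univ_inter, Finset.sum_neg_distrib] at h2
    linarith
  have hsum : ∑ j ∈ T, g j ^ 2 / (2 * L) ≤ ∑ j ∈ T, (EInf f S - EInf f (S ∪ {j})) := by
    refine Finset.sum_le_sum fun j hj => ?_
    have := key j (Finset.mem_union_right _ hj)
    linarith
  have hc : ∑ j ∈ T, g j ^ 2 / (2 * L) = (m / L) * ∑ j ∈ T, g j ^ 2 / (2 * m) := by
    rw [Finset.mul_sum]
    refine Finset.sum_congr rfl fun j _ => ?_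
    field_simp
  have hfin : (m / L) * (EInf f S - EInf f (S ∪ T)) ≤ (m / L) * ∑ j ∈ T, g j ^ 2 / (2 * m) :=
    mul_le_mul_of_nonneg_left (by linarith) (by positivity)
  linarith
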